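/- arXiv:math/9712237 — 3 statements merged into one kernel-verified Lean document; each statement's English description precedes it below -/
import Mathlib

section
/- Let q be a real number with q > 1 and u a real number with 0 < u < 1. For a nonnegative integer N and a partition λ define F(N,λ) = u^{|λ|} · (u/q)_N · (1/q)_N / ( (1/q)_{N−λ'_1} · ∏_{i≥1} q^{(λ'_i)²} (1/q)_{m_i(λ)} ) if λ has at most N parts, and F(N,λ) = 0 otherwise. Then for every N ≥ 1 and every partition λ with at most N parts: F(N,λ) = (1 − u·q^{−N}) · F(N−1, λ) + (u·q^{−N}) · ∑_{s : m_s(λ) ≥ 1} p_s · F(N, λ^{(s)}), where λ^{(s)} is the partition obtained from λ by removing one cell from column s (i.e., replacing one part of size s by a part of size s−1), p_1 = (q^{N−λ'_1+1} − 1)/(q^N − 1), and p_s = (q^{N−λ'_s+1} − q^{N−λ'_{s−1}})/(q^N − 1) for s > 1 (here λ' is the conjugate of λ). -/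
/-- `(x)_M = (1−x)(1−x/q)⋯(1−x/q^{M−1})`, with `(x)_0 = 1`. -/
noncomputable def poch (q x : ℝ) (M : ℕ) : ℝ := ∏ r ∈ Finset.range M, (1 - x / q ^ r)

/-- `∏_{i≥1} q^{(λ'_i)²} (1/q)_{m_i(λ)}`, where `λ'_{i+1} = colLen i` (0-indexed)
and `m_{i+1} = colLen i − colLen (i+1)`. -/
noncomputable def denomProd (q : ℝ) (μ : YoungDiagram) : ℝ :=
  ∏ᶠ i : ℕ, q ^ (μ.colLen i ^ 2) * poch q q⁻¹ (μ.colLen i - μ.colLen (i + 1))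

/-- `F(N,λ) = u^{|λ|} (u/q)_N (1/q)_N / ((1/q)_{N−λ'_1} ∏_{i≥1} q^{(λ'_i)²} (1/q)_{m_i})`
if `λ` has at most `N` parts, and `0` otherwise. -/
noncomputable def Fval (q u : ℝ) (N : ℕ) (μ : YoungDiagram) : ℝ :=
  if μ.colLen 0 ≤ N then
    u ^ μ.card * poch q (u / q) N * poch q q⁻¹ N /
      (poch q q⁻¹ (N - μ.colLen 0) * denomProd q μ)
  else 0

/-- `λ^{(s)}`: the partition obtained from `λ` by removing one cell from column `s`
(1-indexed; the removed cell is the bottom cell `(λ'_s − 1, s − 1)` of that column,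
0-indexed).  Defined to be `λ` itself when `m_s(λ) = 0` (no removal possible). -/
def eraseCol (μ : YoungDiagram) (s : ℕ) : YoungDiagram :=
  if h : 1 ≤ s ∧ μ.colLen s < μ.colLen (s - 1) then
    { cells := μ.cells.erase (μ.colLen (s - 1) - 1, s - 1)
      isLowerSet := by
        intro a b hba ha
        simp only [Finset.coe_erase, Set.mem_diff, Set.mem_singleton_iff] at ha ⊢
        obtain ⟨haμ, hane⟩ := ha
        refine ⟨μ.isLowerSet hba haμ, fun hbc => hane ?_⟩
        subst hbc
        have h1 : μ.colLen (s - 1) - 1 ≤ a.1 := hba.1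
        have h2 : s - 1 ≤ a.2 := hba.2
        have haμ' : (a.1, a.2) ∈ μ := by simpa [← YoungDiagram.mem_cells] using haμ
        have hlt : a.1 < μ.colLen a.2 := YoungDiagram.mem_iff_lt_colLen.mp haμ'
        have ha2 : a.2 = s - 1 := by
          by_contra hne
          have hs : s ≤ a.2 := by omega
          have := μ.colLen_anti s a.2 hs
          omega
        have ha1 : a.1 = μ.colLen (s - 1) - 1 := by rw [ha2] at hlt; omega
        exact Prod.ext ha1 ha2 }
  else μ

/-!
Set `λ'_0 = N`. Then the case distinction in `p_s` disappears, and the denominator of `F(N,λ)`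
is, up to the factor `q^(N²)`, the product of `q^(λ'_i²) (1/q)_{λ'_i - λ'_{i+1}}` over all `i ≥ 0`.
Removing a cell from column `s` changes only the factors `i = s - 1` and `i = s`, which gives
`u q^{-N} p_s F(N,λ^{(s)}) = F(N,λ) (q^{λ'_s} - q^{λ'_{s+1}}) / (q^N - 1)`.
These terms telescope to `F(N,λ) (q^{λ'_1} - 1) / (q^N - 1)`, while
`(1 - u q^{-N}) F(N-1,λ) = F(N,λ) (q^N - q^{λ'_1}) / (q^N - 1)`.
-/

section FiniteProducts

variable {M : Type*} [CommMonoid M]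

lemma finprod_eq_zero_mul {f : ℕ → M} (hf : f.HasFiniteMulSupport) :
    ∏ᶠ i, f i = f 0 * ∏ᶠ i, f (i + 1) := by
  rw [← mul_finprod_cond_ne 0 hf, ← finprod_mem_range (f := f) Nat.succ_injective, Nat.range_succ]
  simp only [Set.mem_ofPred_eq, Nat.pos_iff_ne_zero]

lemma finprod_mul_pair_comm {ι : Type*} {f g : ι → M} (hf : f.HasFiniteMulSupport)
    (hg : g.HasFiniteMulSupport) {a b : ι} (hab : a ≠ b) (hfg : ∀ i, i ≠ a → i ≠ b → f i = g i) :
    (∏ᶠ i, f i) * (g a * g b) = (∏ᶠ i, g i) * (f a * f b) := by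
  have finite_indicator (h : ι → M) : (({a, b} : Set ι).mulIndicator h).HasFiniteMulSupport :=
    (Set.toFinite {a, b}).subset Set.mulSupport_mulIndicator_subset
  rw [← finprod_mem_pair hab, ← finprod_mem_pair hab, finprod_mem_def, finprod_mem_def,
    ← finprod_mul_distrib hf (finite_indicator g), ← finprod_mul_distrib hg (finite_indicator f)]
  refine finprod_congr fun i => ?_
  by_cases hi : i ∈ ({a, b} : Set ι)
  · simp only [Set.mulIndicator_of_mem hi, mul_comm]
  · simp only [Set.mem_insert_iff, Set.mem_singleton_iff, not_or] at hi
    simp [hi, hfg i hi.1 hi.2]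

end FiniteProducts

section Pochhammer

variable {q : ℝ}

lemma poch_succ (q x : ℝ) (m : ℕ) : poch q x (m + 1) = poch q x m * (1 - x / q ^ m) :=
  Finset.prod_range_succ _ _

lemma pow_ne_one_of_abs_ne_one (hq : |q| ≠ 1) {m : ℕ} (hm : m ≠ 0) : q ^ m ≠ 1 := fun h =>
  hq ((abs_pow_eq_one q hm).mp (by rw [h, abs_one]))

lemma poch_inv_ne_zero (hq : |q| ≠ 1) (m : ℕ) : poch q q⁻¹ m ≠ 0 := by
  refine Finset.prod_ne_zero_iff.mpr fun r _ => sub_ne_zero.mpr (Ne.symm ?_)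
  rw [div_eq_mul_inv, ← mul_inv, ← pow_succ', ne_eq, inv_eq_one]
  exact pow_ne_one_of_abs_ne_one hq r.succ_ne_zero

lemma poch_inv_succ_sub_mul_pow (hq : q ≠ 0) {a b : ℕ} (hba : b ≤ a) :
    poch q q⁻¹ (a + 1 - b) * q ^ (a + 1) = poch q q⁻¹ (a - b) * (q ^ (a + 1) - q ^ b) := by
  obtain ⟨m, rfl⟩ := Nat.exists_eq_add_of_le hba
  rw [add_assoc, Nat.add_sub_cancel_left, Nat.add_sub_cancel_left, poch_succ, pow_add, pow_succ]
  field_simp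

lemma poch_inv_sub_mul_zpow (hq : q ≠ 0) {a b : ℕ} (hba : b < a) (k : ℤ) :
    poch q q⁻¹ (a - b) * q ^ (k - b) =
      poch q q⁻¹ (a - (b + 1)) * (q ^ (k - b) - q ^ (k - a)) := by
  have zpow_sub_left : q ^ (k - b) = q ^ (a + 1) * q ^ (k - a - b - 1) := by
    rw [← zpow_natCast, ← zpow_add₀ hq]
    push_cast
    ring_nf
  have zpow_sub_right : q ^ (k - a) = q ^ (b + 1) * q ^ (k - a - b - 1) := by
    rw [← zpow_natCast, ← zpow_add₀ hq]
    push_cast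
    ring_nf
  have poch_eq := poch_inv_succ_sub_mul_pow hq (b := b + 1) hba
  rw [Nat.add_sub_add_right] at poch_eq
  rw [zpow_sub_left, zpow_sub_right]
  linear_combination q ^ (k - a - b - 1) * poch_eq

lemma poch_inv_div_poch_inv_sub (hq₀ : q ≠ 0) (hq₁ : |q| ≠ 1) {a b : ℕ} (hba : b ≤ a) :
    poch q q⁻¹ a / poch q q⁻¹ (a - b) =
      poch q q⁻¹ (a + 1) / poch q q⁻¹ (a + 1 - b) *
        ((q ^ (a + 1) - q ^ b) / (q ^ (a + 1) - 1)) := by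
  have poch_sub := poch_inv_succ_sub_mul_pow hq₀ hba
  have poch_self := poch_inv_succ_sub_mul_pow hq₀ a.zero_le
  rw [Nat.sub_zero, Nat.sub_zero, pow_zero] at poch_self
  have pow_sub_one_ne_zero : q ^ (a + 1) - 1 ≠ 0 :=
    sub_ne_zero.mpr (pow_ne_one_of_abs_ne_one hq₁ a.succ_ne_zero)
  rw [div_mul_div_comm, div_eq_div_iff (poch_inv_ne_zero hq₁ _)
    (mul_ne_zero (poch_inv_ne_zero hq₁ _) pow_sub_one_ne_zero)]
  linear_combination poch q q⁻¹ (a + 1) * poch_sub - poch q q⁻¹ (a + 1 - b) * poch_self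

end Pochhammer

section YoungDiagrams

lemma colLen_eq_zero_iff {μ : YoungDiagram} {j : ℕ} : μ.colLen j = 0 ↔ μ.rowLen 0 ≤ j := by
  rw [← not_lt, ← YoungDiagram.mem_iff_lt_rowLen, YoungDiagram.mem_iff_lt_colLen,
    Nat.pos_iff_ne_zero, not_not]

lemma cells_eraseCol_succ {μ : YoungDiagram} {t : ℕ} (ht : μ.colLen (t + 1) < μ.colLen t) :
    (eraseCol μ (t + 1)).cells = μ.cells.erase (μ.colLen t - 1, t) := by
  rw [eraseCol, dif_pos ⟨t.succ_pos, ht⟩]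
  rfl

lemma card_eraseCol_succ {μ : YoungDiagram} {t : ℕ} (ht : μ.colLen (t + 1) < μ.colLen t) :
    (eraseCol μ (t + 1)).card + 1 = μ.card := by
  rw [YoungDiagram.card, cells_eraseCol_succ ht]
  refine Finset.card_erase_add_one ?_
  rw [YoungDiagram.mem_cells, YoungDiagram.mem_iff_lt_colLen]
  omega

lemma colLen_eraseCol_succ {μ : YoungDiagram} {t : ℕ} (ht : μ.colLen (t + 1) < μ.colLen t) :
    (eraseCol μ (t + 1)).colLen = Function.update μ.colLen t (μ.colLen t - 1) := by
  funext j
  refine eq_of_forall_lt_iff fun i => ?_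
  rw [← YoungDiagram.mem_iff_lt_colLen, ← YoungDiagram.mem_cells, cells_eraseCol_succ ht,
    Finset.mem_erase, YoungDiagram.mem_cells, YoungDiagram.mem_iff_lt_colLen, ne_eq,
    Prod.mk.injEq]
  obtain rfl | hj := eq_or_ne j t
  · rw [Function.update_self]
    omega
  · simp [hj]

/-- The (1-based) columns `s` with `m_s(λ) ≥ 1`, that is, those that admit a cell removal. -/
def removableCols (μ : YoungDiagram) : Set ℕ := {s | 1 ≤ s ∧ μ.colLen s < μ.colLen (s - 1)}

lemma finsum_removableCols_sub {A : Type*} [AddCommGroup A] (g : ℕ → A) (μ : YoungDiagram) :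
    ∑ᶠ s ∈ removableCols μ, (g (μ.colLen (s - 1)) - g (μ.colLen s)) = g (μ.colLen 0) - g 0 := by
  have mem_iff {s : ℕ} (hs : g (μ.colLen (s - 1)) - g (μ.colLen s) ≠ 0) :
      s ∈ removableCols μ ↔ s ∈ Finset.range (μ.rowLen 0 + 1) := by
    have colLen_ne : μ.colLen (s - 1) ≠ μ.colLen s := fun h => hs (by rw [h, sub_self])
    have colLen_le := μ.colLen_anti (s - 1) s (s.sub_le 1)
    have colLen_pred_eq_zero_iff := colLen_eq_zero_iff (μ := μ) (j := s - 1)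
    have s_ne_zero : s ≠ 0 := by
      rintro rfl
      exact colLen_ne rfl
    rw [removableCols, Set.mem_ofPred_eq, Finset.mem_range]
    omega
  rw [finsum_cond_eq_sum_of_cond_iff _ mem_iff, Finset.sum_range_succ']
  simp only [Nat.add_sub_cancel, Nat.zero_sub, sub_self, add_zero]
  rw [Finset.sum_range_sub' (fun i => g (μ.colLen i)), colLen_eq_zero_iff.mpr le_rfl]

end YoungDiagrams

section ExtendedColumns

/-- The conjugate partition `λ'_1, λ'_2, …` preceded by `λ'_0 = N`; the index is thus the
1-based one of the paper. -/
def extColLen (N : ℕ) (μ : YoungDiagram) : ℕ → ℕ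
  | 0 => N
  | s + 1 => μ.colLen s

lemma hasFiniteSupport_extColLen (N : ℕ) (μ : YoungDiagram) :
    (extColLen N μ).HasFiniteSupport := by
  refine (Finset.range (μ.rowLen 0 + 1)).finite_toSet.subset fun s hs => ?_
  rw [Finset.mem_coe, Finset.mem_range]
  cases s with
  | zero => exact Nat.succ_pos _
  | succ t => exact Nat.succ_lt_succ (not_le.mp (mt colLen_eq_zero_iff.mpr hs))

lemma extColLen_antitone {N : ℕ} {μ : YoungDiagram} (hμ : μ.colLen 0 ≤ N) :
    Antitone (extColLen N μ) := by
  refine antitone_nat_of_succ_le fun s => ?_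
  cases s with
  | zero => exact hμ
  | succ t => exact μ.colLen_anti t (t + 1) t.le_succ

lemma extColLen_eraseCol_succ (N : ℕ) {μ : YoungDiagram} {t : ℕ}
    (ht : μ.colLen (t + 1) < μ.colLen t) :
    extColLen N (eraseCol μ (t + 1)) =
      Function.update (extColLen N μ) (t + 1) (extColLen N μ (t + 1) - 1) := by
  funext s
  cases s with
  | zero => rfl
  | succ j => simp only [extColLen, colLen_eraseCol_succ ht, Function.update_apply, Nat.succ_inj]

end ExtendedColumns

section Denominators

variable {q : ℝ} {d : ℕ → ℕ}

/-- The `i`-th factor `q^(d_i²) (1/q)_{d_i - d_{i+1}}` of the denominator attached to a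
sequence `d` of column lengths. -/
noncomputable def denomFactor (q : ℝ) (d : ℕ → ℕ) (i : ℕ) : ℝ :=
  q ^ (d i ^ 2) * poch q q⁻¹ (d i - d (i + 1))

/-- The product of all `denomFactor`s; `denomProd q μ` is the case `d = μ.colLen`. -/
noncomputable def seqDenom (q : ℝ) (d : ℕ → ℕ) : ℝ := ∏ᶠ i, denomFactor q d i

lemma denomFactor_ne_zero (hq₀ : q ≠ 0) (hq₁ : |q| ≠ 1) (d : ℕ → ℕ) (i : ℕ) :
    denomFactor q d i ≠ 0 :=
  mul_ne_zero (pow_ne_zero _ hq₀) (poch_inv_ne_zero hq₁ _)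

lemma seqDenom_ne_zero (hq₀ : q ≠ 0) (hq₁ : |q| ≠ 1) (d : ℕ → ℕ) : seqDenom q d ≠ 0 :=
  finprod_induction (· ≠ 0) one_ne_zero (fun _ _ => mul_ne_zero) (denomFactor_ne_zero hq₀ hq₁ d)

lemma hasFiniteMulSupport_denomFactor (q : ℝ) (hd : d.HasFiniteSupport) :
    (denomFactor q d).HasFiniteMulSupport := by
  refine Set.Finite.subset hd fun i hi hdi => hi ?_
  simp [denomFactor, poch, hdi]

lemma seqDenom_extColLen (q : ℝ) (N : ℕ) (μ : YoungDiagram) :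
    seqDenom q (extColLen N μ) =
      q ^ (N ^ 2) * (poch q q⁻¹ (N - μ.colLen 0) * denomProd q μ) := by
  rw [seqDenom, finprod_eq_zero_mul
    (hasFiniteMulSupport_denomFactor q (hasFiniteSupport_extColLen N μ)), ← mul_assoc]
  rfl

lemma denomFactor_mul_denomFactor_update (hq : q ≠ 0) {t : ℕ} (ht : d (t + 1) ≤ d t)
    (ht' : d (t + 2) < d (t + 1)) (k : ℤ) :
    denomFactor q d t * denomFactor q d (t + 1) *
        (q ^ (k - d (t + 1) + 1) - q ^ (k - d t)) =
      q ^ k * (q ^ d (t + 1) - q ^ d (t + 2)) *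
        (denomFactor q (Function.update d (t + 1) (d (t + 1) - 1)) t *
          denomFactor q (Function.update d (t + 1) (d (t + 1) - 1)) (t + 1)) := by
  obtain ⟨b, hb⟩ : ∃ b, d (t + 1) = b + 1 := Nat.exists_eq_succ_of_ne_zero (by omega)
  rw [hb] at ht ht' ⊢
  have poch_left := poch_inv_sub_mul_zpow hq (Nat.lt_of_succ_le ht) k
  have poch_right := poch_inv_succ_sub_mul_pow hq (Nat.le_of_lt_succ ht')
  have pow_eq : q ^ ((b + 1) ^ 2) * q ^ (k - b) = q ^ k * q ^ (b ^ 2) * q ^ (b + 1) := by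
    simp only [← zpow_natCast, ← zpow_add₀ hq]
    push_cast
    ring_nf
  rw [show k - (b + 1 : ℕ) + 1 = k - b by omega]
  simp only [denomFactor, Nat.add_sub_cancel, Function.update_self, Function.update_of_ne, hb,
    ne_eq, Nat.left_eq_add, Nat.add_eq_left, one_ne_zero, not_false_eq_true]
  linear_combination
    -(q ^ (d t ^ 2) * q ^ ((b + 1) ^ 2) * poch q q⁻¹ (b + 1 - d (t + 2))) * poch_left +
    q ^ k * q ^ (d t ^ 2) * q ^ (b ^ 2) * poch q q⁻¹ (d t - b) * poch_right +
    q ^ (d t ^ 2) * poch q q⁻¹ (d t - b) * poch q q⁻¹ (b + 1 - d (t + 2)) * pow_eq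

lemma seqDenom_update (hq₀ : q ≠ 0) (hq₁ : |q| ≠ 1) (hd : d.HasFiniteSupport) {t : ℕ}
    (ht : d (t + 1) ≤ d t) (ht' : d (t + 2) < d (t + 1)) (k : ℤ) :
    seqDenom q d * (q ^ (k - d (t + 1) + 1) - q ^ (k - d t)) =
      q ^ k * (q ^ d (t + 1) - q ^ d (t + 2)) *
        seqDenom q (Function.update d (t + 1) (d (t + 1) - 1)) := by
  have factors_eq := denomFactor_mul_denomFactor_update hq₀ ht ht' k
  set d' := Function.update d (t + 1) (d (t + 1) - 1)
  have hd' : d'.HasFiniteSupport := by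
    refine Set.Finite.subset hd fun i hi hdi => hi ?_
    obtain rfl | h := eq_or_ne i (t + 1) <;> simp [d', *]
  have factors_agree (i : ℕ) (hi : i ≠ t) (hi' : i ≠ t + 1) :
      denomFactor q d i = denomFactor q d' i := by
    simp [denomFactor, d', hi, hi']
  have prod_eq : seqDenom q d * (denomFactor q d' t * denomFactor q d' (t + 1)) =
      seqDenom q d' * (denomFactor q d t * denomFactor q d (t + 1)) :=
    finprod_mul_pair_comm (hasFiniteMulSupport_denomFactor q hd)
      (hasFiniteMulSupport_denomFactor q hd') t.succ_ne_self.symm factors_agree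
  refine mul_right_cancel₀ (mul_ne_zero (denomFactor_ne_zero hq₀ hq₁ d' t)
    (denomFactor_ne_zero hq₀ hq₁ d' (t + 1))) ?_
  linear_combination (q ^ (k - d (t + 1) + 1) - q ^ (k - d t)) * prod_eq +
    seqDenom q d' * factors_eq

end Denominators

section Recurrence

variable {q : ℝ} (u : ℝ)

/-- The probability `p_s` of removing a cell from column `s ≥ 1`. By the convention `λ'_0 = N`
one formula covers both `s = 1` and `s > 1`. -/
noncomputable def removalProb (q : ℝ) (N : ℕ) (μ : YoungDiagram) (s : ℕ) : ℝ :=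
  (q ^ ((N : ℤ) - extColLen N μ s + 1) - q ^ ((N : ℤ) - extColLen N μ (s - 1))) / (q ^ N - 1)

lemma removalProb_eq_ite (q : ℝ) (N : ℕ) (μ : YoungDiagram) {s : ℕ} (hs : 1 ≤ s) :
    removalProb q N μ s =
      if s = 1 then (q ^ ((N : ℤ) - (μ.colLen 0 : ℤ) + 1) - 1) / (q ^ N - 1)
      else (q ^ ((N : ℤ) - (μ.colLen (s - 1) : ℤ) + 1) -
        q ^ ((N : ℤ) - (μ.colLen (s - 2) : ℤ))) / (q ^ N - 1) := by
  match s, hs with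
  | 1, _ => simp [removalProb, extColLen]
  | s + 2, _ => simp [removalProb, extColLen]

lemma Fval_eq_zero (q u : ℝ) {N : ℕ} {μ : YoungDiagram} (hμ : N < μ.colLen 0) :
    Fval q u N μ = 0 :=
  if_neg hμ.not_ge

lemma Fval_eq_div_seqDenom (hq : q ≠ 0) {N : ℕ} {μ : YoungDiagram} (hμ : μ.colLen 0 ≤ N) :
    Fval q u N μ = u ^ μ.card * (poch q (u / q) N * poch q q⁻¹ N * q ^ (N ^ 2)) /
      seqDenom q (extColLen N μ) := by
  rw [Fval, if_pos hμ, seqDenom_extColLen, ← mul_assoc, ← mul_assoc, mul_comm (q ^ (N ^ 2)),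
    mul_div_mul_right _ _ (pow_ne_zero _ hq)]

/-- A removal leads to at most `N` parts only from `λ'_1 = N + 1`, and then `p_1 = 0`. -/
lemma removalProb_mul_Fval_eraseCol_eq_zero (q u : ℝ) {N : ℕ} {μ : YoungDiagram} {t : ℕ}
    (hμ : N < μ.colLen 0) (ht : μ.colLen (t + 1) < μ.colLen t) :
    removalProb q N μ (t + 1) * Fval q u N (eraseCol μ (t + 1)) = 0 := by
  by_cases h : N < (eraseCol μ (t + 1)).colLen 0
  · rw [Fval_eq_zero q u h, mul_zero]
  rw [colLen_eraseCol_succ ht, Function.update_apply] at h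
  obtain rfl : t = 0 := by
    by_contra h0
    exact h (by rwa [if_neg (Ne.symm h0)])
  have colLen_eq : μ.colLen 0 = N + 1 := by
    rw [if_pos rfl] at h
    omega
  simp [removalProb, extColLen, colLen_eq]

lemma removalProb_div_seqDenom_eraseCol (hq₀ : q ≠ 0) (hq₁ : |q| ≠ 1) {N : ℕ} {μ : YoungDiagram}
    {t : ℕ} (hμ : μ.colLen 0 ≤ N) (ht : μ.colLen (t + 1) < μ.colLen t) :
    removalProb q N μ (t + 1) / q ^ N / seqDenom q (extColLen N (eraseCol μ (t + 1))) =
      (q ^ μ.colLen t - q ^ μ.colLen (t + 1)) / (q ^ N - 1) / seqDenom q (extColLen N μ) := by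
  have denom_eq := seqDenom_update hq₀ hq₁ (hasFiniteSupport_extColLen N μ)
    (extColLen_antitone hμ t.le_succ) ht N
  rw [← extColLen_eraseCol_succ N ht, zpow_natCast] at denom_eq
  rw [removalProb, Nat.add_sub_cancel, div_right_comm _ (q ^ N - 1), div_right_comm _ (q ^ N - 1),
    div_right_comm _ (q ^ N - 1), div_div _ (q ^ N), mul_comm (q ^ N)]
  congr 1
  rw [div_eq_div_iff (mul_ne_zero (seqDenom_ne_zero hq₀ hq₁ _) (pow_ne_zero N hq₀))
    (seqDenom_ne_zero hq₀ hq₁ _), mul_comm, denom_eq]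
  simp only [extColLen]
  ring

lemma removalProb_mul_Fval_eraseCol (hq₀ : q ≠ 0) (hq₁ : |q| ≠ 1) (N : ℕ) {μ : YoungDiagram}
    {s : ℕ} (hs : s ∈ removableCols μ) :
    u / q ^ N * (removalProb q N μ s * Fval q u N (eraseCol μ s)) =
      Fval q u N μ / (q ^ N - 1) * (q ^ μ.colLen (s - 1) - q ^ μ.colLen s) := by
  obtain ⟨t, rfl⟩ := Nat.exists_eq_add_of_le' hs.1
  have ht : μ.colLen (t + 1) < μ.colLen t := hs.2
  obtain hμ | hμ := lt_or_ge N (μ.colLen 0)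
  · rw [removalProb_mul_Fval_eraseCol_eq_zero q u hμ ht, Fval_eq_zero q u hμ, mul_zero, zero_div,
      zero_mul]
  have hμ' : (eraseCol μ (t + 1)).colLen 0 ≤ N := by
    rw [colLen_eraseCol_succ ht]
    exact (update_le_self_iff.mpr (Nat.sub_le _ _) 0).trans hμ
  rw [Fval_eq_div_seqDenom u hq₀ hμ, Fval_eq_div_seqDenom u hq₀ hμ', ← card_eraseCol_succ ht,
    Nat.add_sub_cancel]
  linear_combination u ^ ((eraseCol μ (t + 1)).card + 1) *
    (poch q (u / q) N * poch q q⁻¹ N * q ^ (N ^ 2)) *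
      removalProb_div_seqDenom_eraseCol hq₀ hq₁ hμ ht

lemma one_sub_mul_Fval (hq₀ : q ≠ 0) (hq₁ : |q| ≠ 1) (N : ℕ) (μ : YoungDiagram) :
    (1 - u / q ^ (N + 1)) * Fval q u N μ =
      Fval q u (N + 1) μ / (q ^ (N + 1) - 1) * (q ^ (N + 1) - q ^ μ.colLen 0) := by
  obtain hμ | hμ := lt_or_ge N (μ.colLen 0)
  · rw [Fval_eq_zero q u hμ, mul_zero]
    obtain h | h := (Nat.succ_le_of_lt hμ).eq_or_lt
    · rw [← h, sub_self, mul_zero]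
    · rw [Fval_eq_zero q u h, zero_div, zero_mul]
  have poch_u : poch q (u / q) (N + 1) = poch q (u / q) N * (1 - u / q ^ (N + 1)) := by
    rw [poch_succ, div_div, ← pow_succ']
  rw [Fval, Fval, if_pos hμ, if_pos (hμ.trans N.le_succ), poch_u]
  linear_combination (1 - u / q ^ (N + 1)) * u ^ μ.card * poch q (u / q) N / denomProd q μ *
    poch_inv_div_poch_inv_sub hq₀ hq₁ hμ

lemma finsum_removalProb_mul_Fval_eraseCol (hq₀ : q ≠ 0) (hq₁ : |q| ≠ 1) (N : ℕ)
    (μ : YoungDiagram) :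
    u / q ^ N * ∑ᶠ s ∈ removableCols μ, removalProb q N μ s * Fval q u N (eraseCol μ s) =
      Fval q u N μ / (q ^ N - 1) * (q ^ μ.colLen 0 - 1) := by
  have telescope := finsum_removableCols_sub (q ^ ·) μ
  rw [pow_zero] at telescope
  rw [← telescope, mul_finsum_mem, mul_finsum_mem]
  exact finsum_mem_congr rfl fun s hs => removalProb_mul_Fval_eraseCol u hq₀ hq₁ N hs

end Recurrence

theorem stmt_14_general (q u : ℝ) (hq₀ : q ≠ 0) (hq₁ : |q| ≠ 1) (N : ℕ) (hN : 1 ≤ N)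
    (μ : YoungDiagram) :
    Fval q u N μ =
      (1 - u / q ^ N) * Fval q u (N - 1) μ +
        u / q ^ N *
          ∑ᶠ (s : ℕ) (_ : 1 ≤ s ∧ μ.colLen s < μ.colLen (s - 1)),
            (if s = 1 then (q ^ ((N : ℤ) - (μ.colLen 0 : ℤ) + 1) - 1) / (q ^ N - 1)
              else (q ^ ((N : ℤ) - (μ.colLen (s - 1) : ℤ) + 1) -
                  q ^ ((N : ℤ) - (μ.colLen (s - 2) : ℤ))) / (q ^ N - 1)) *
              Fval q u N (eraseCol μ s) := by
  have pred_eq := one_sub_mul_Fval u hq₀ hq₁ (N - 1) μ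
  rw [Nat.sub_add_cancel hN] at pred_eq
  have sum_eq := finsum_removalProb_mul_Fval_eraseCol u hq₀ hq₁ N μ
  rw [finsum_mem_congr rfl fun s hs => by rw [removalProb_eq_ite q N μ hs.1]] at sum_eq
  have pow_sub_one_ne_zero : q ^ N - 1 ≠ 0 :=
    sub_ne_zero.mpr (pow_ne_one_of_abs_ne_one hq₁ (Nat.one_le_iff_ne_zero.mp hN))
  calc
    Fval q u N μ = Fval q u N μ / (q ^ N - 1) * (q ^ N - q ^ μ.colLen 0) +
        Fval q u N μ / (q ^ N - 1) * (q ^ μ.colLen 0 - 1) := by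
      rw [← mul_add, sub_add_sub_cancel, div_mul_cancel₀ _ pow_sub_one_ne_zero]
    _ = _ := by
      rw [← pred_eq, ← sum_eq]
      rfl

/-- The recurrence behind the Young Tableau Algorithm: for `q > 1`, `0 < u < 1`,
`N ≥ 1` and a partition `λ` with at most `N` parts,
`F(N,λ) = (1 − u q^{−N}) F(N−1,λ) + u q^{−N} ∑_{s : m_s(λ) ≥ 1} p_s F(N,λ^{(s)})`,
where `p_1 = (q^{N−λ'_1+1}−1)/(q^N−1)` and, for `s > 1`,
`p_s = (q^{N−λ'_s+1} − q^{N−λ'_{s−1}})/(q^N−1)`  (`λ'_s = colLen (s−1)`, 0-indexed). -/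
theorem stmt_14 (q u : ℝ) (hq : 1 < q) (hu0 : 0 < u) (hu1 : u < 1)
    (N : ℕ) (hN : 1 ≤ N) (μ : YoungDiagram) (hμ : μ.colLen 0 ≤ N) :
    Fval q u N μ =
      (1 - u / q ^ N) * Fval q u (N - 1) μ +
        u / q ^ N *
          ∑ᶠ (s : ℕ) (_ : 1 ≤ s ∧ μ.colLen s < μ.colLen (s - 1)),
            (if s = 1 then (q ^ ((N : ℤ) - (μ.colLen 0 : ℤ) + 1) - 1) / (q ^ N - 1)
              else (q ^ ((N : ℤ) - (μ.colLen (s - 1) : ℤ) + 1) -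
                  q ^ ((N : ℤ) - (μ.colLen (s - 2) : ℤ))) / (q ^ N - 1)) *
              Fval q u N (eraseCol μ s) := by
  have hq₁ : |q| ≠ 1 := (hq.trans_le (le_abs_self q)).ne'
  exact stmt_14_general q u (zero_lt_one.trans hq).ne' hq₁ N hN μ
end

section
/- Let u be a real number with 0 < u < 1 and let k be a positive integer. For a permutation π of a finite set, let a_i(π) denote the number of cycles of π of length i. Then for any nonnegative integers c_1, …, c_k: ∑_{n=0}^∞ (1−u)·u^n/n! · #{π ∈ S_n : a_i(π) = c_i for all 1 ≤ i ≤ k} = ∏_{i=1}^k e^{−u^i/i} · (u^i/i)^{c_i} / c_i!. In particular, under the measure that picks n with probability (1−u)u^n and then π uniformly in S_n, the random variables a_1(π), …, a_k(π) are independent Poisson with parameters u^1/1, …, u^k/k. -/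
/-- `a_i(π)`: the number of cycles (orbits) of length `i` of the permutation `π`. -/
noncomputable def numCycles (n : ℕ) (π : Equiv.Perm (Fin n)) (i : ℕ) : ℕ :=
  Set.ncard {o : Set (Fin n) | (∃ x, o = {y | π.SameCycle x y}) ∧ o.ncard = i}

/-!
Put `x i = z ^ i / i`. By Cauchy's formula the permutations with `m i` cycles of length `i` have
total weight `∏ i, x i ^ m i / (m i)!` when each `π ∈ S_n` has weight `z ^ n / n!`. All these sums
converge absolutely for `‖z‖ < 1`, because every `n` contributes `‖z‖ ^ n`, and the total over all
permutations is `1 / (1 - z)`.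

The product form makes the coordinates independent: prescribing `m i = a` in a set of
configurations `m` that does not constrain coordinate `i` gives `x i ^ a / a!` times the
contribution of `m i = 0`, and summing over `a` shows that the whole set weighs `exp (x i)` times
that contribution. So each prescribed coordinate contributes a factor
`exp (-x i) * x i ^ a / a!`, and the factor `1 / (1 - z)` cancels the normalization `1 - z`.
-/

open Equiv NormedSpace Nat

section PoissonWeight

variable {ι K 𝕜 : Type*} [Field K] [NormedField 𝕜]

/-- The unnormalized joint density `∏ i, x i ^ m i / (m i)!` of independent Poisson variables with
parameters `x i`. The index set may be infinite, so a configuration is finitely supported; the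
parameters range over a field, so that complex values are allowed. -/
noncomputable def poissonWeight (x : ι → K) (m : ι →₀ ℕ) : K :=
  m.prod fun i a ↦ x i ^ a / a !

lemma poissonWeight_eq_mul_erase (x : ι → K) (m : ι →₀ ℕ) (i : ι) :
    poissonWeight x m = x i ^ m i / (m i)! * poissonWeight x (m.erase i) :=
  (m.mul_prod_erase' i _ fun _ ↦ by simp).symm

/-- Setting the `i`-th coordinate to `0`, as a bijection from the part of `A` where that coordinate
equals `a` to the part where it vanishes, for a set `A` that does not constrain coordinate `i`. -/
noncomputable def eraseSliceEquiv {A : Set (ι →₀ ℕ)} {i : ι}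
    (hA : ∀ m, m.erase i ∈ A ↔ m ∈ A) (a : ℕ) :
    ↥(A ∩ {m | m i = a}) ≃ ↥(A ∩ {m | m i = 0}) where
  toFun m := ⟨m.1.erase i, (hA _).2 m.2.1, m.1.erase_same⟩
  invFun m := ⟨m.1.update i a, (hA _).1 (by simpa [hA] using m.2.1), by simp [Finsupp.update]⟩
  left_inv := by
    rintro ⟨m, -, rfl⟩
    simp
  right_inv := by
    rintro ⟨m, -, hm : m i = 0⟩
    have erase_eq : m.erase i = m := Finsupp.erase_of_notMem_support (by simpa using hm)
    simp [erase_eq]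

lemma tsum_poissonWeight_slice (x : ι → 𝕜) {A : Set (ι →₀ ℕ)} {i : ι}
    (hA : ∀ m, m.erase i ∈ A ↔ m ∈ A) (a : ℕ) :
    ∑' m : ↥(A ∩ {m | m i = a}), poissonWeight x m =
      x i ^ a / a ! * ∑' m : ↥(A ∩ {m | m i = 0}), poissonWeight x m := by
  rw [← (eraseSliceEquiv hA a).tsum_eq, ← tsum_mul_left]
  refine tsum_congr ?_
  rintro ⟨m, -, rfl⟩
  exact poissonWeight_eq_mul_erase x m i

variable [NormedAlgebra ℚ 𝕜] [CompleteSpace 𝕜] {x : ι → 𝕜}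

lemma tsum_poissonWeight_eq_exp_mul (hx : Summable (poissonWeight x)) {A : Set (ι →₀ ℕ)} {i : ι}
    (hA : ∀ m, m.erase i ∈ A ↔ m ∈ A) :
    ∑' m : A, poissonWeight x m =
      exp (x i) * ∑' m : ↥(A ∩ {m | m i = 0}), poissonWeight x m := by
  have slice_eq_fiber (a : ℕ) : ∑' m : ↥(A ∩ {m | m i = a}), poissonWeight x m =
      ∑' m : ↥((fun m : ι →₀ ℕ ↦ m i) ⁻¹' {a}), A.indicator (poissonWeight x) m := by
    rw [tsum_subtype, tsum_subtype, Set.indicator_indicator, Set.inter_comm]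
    rfl
  have sum_slices := (hx.indicator A).hasSum.tsum_fiberwise fun m ↦ m i
  rw [← funext slice_eq_fiber, ← tsum_subtype A, funext (tsum_poissonWeight_slice x hA)]
    at sum_slices
  exact sum_slices.unique ((expSeries_div_hasSum_exp (x i)).mul_right _)

lemma tsum_poissonWeight_inter_apply_eq (hx : Summable (poissonWeight x)) {A : Set (ι →₀ ℕ)} {i : ι}
    (hA : ∀ m, m.erase i ∈ A ↔ m ∈ A) (a : ℕ) :
    ∑' m : ↥(A ∩ {m | m i = a}), poissonWeight x m =
      exp (-x i) * x i ^ a / a ! * ∑' m : A, poissonWeight x m := by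
  have exp_mul_exp_neg : exp (x i) * exp (-x i) = 1 := by
    rw [← exp_add, add_neg_cancel, exp_zero]
  rw [tsum_poissonWeight_slice x hA, tsum_poissonWeight_eq_exp_mul hx hA]
  linear_combination (-(x i ^ a / a ! * ∑' m : ↥(A ∩ {m | m i = 0}), poissonWeight x m)) *
    exp_mul_exp_neg

theorem tsum_poissonWeight_cylinder (hx : Summable (poissonWeight x)) (S : Finset ι) (c : ι → ℕ) :
    ∑' m : {m : ι →₀ ℕ | ∀ i ∈ S, m i = c i}, poissonWeight x m =
      (∏ i ∈ S, exp (-x i) * x i ^ c i / (c i)!) * ∑' m, poissonWeight x m := by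
  classical
  induction S using Finset.induction_on with
  | empty => simp [tsum_subtype]
  | insert i S hi ih =>
    have cylinder_erase (m : ι →₀ ℕ) :
        m.erase i ∈ {m : ι →₀ ℕ | ∀ j ∈ S, m j = c j} ↔ m ∈ {m : ι →₀ ℕ | ∀ j ∈ S, m j = c j} :=
      forall₂_congr fun j hj ↦ by rw [Finsupp.erase_ne (ne_of_mem_of_not_mem hj hi)]
    have cylinder_insert : {m : ι →₀ ℕ | ∀ j ∈ insert i S, m j = c j} =
        {m | ∀ j ∈ S, m j = c j} ∩ {m | m i = c i} := by
      ext m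
      simp [and_comm]
    rw [cylinder_insert, tsum_poissonWeight_inter_apply_eq hx cylinder_erase, ih,
      Finset.prod_insert hi, mul_assoc]

end PoissonWeight

section CycleClasses

variable {α : Type*} {π : Perm α} {x : α}

lemma setOf_sameCycle_of_apply_eq_self (hx : π x = x) : {y | π.SameCycle x y} = {x} :=
  Set.ext fun _ ↦ ⟨fun h ↦ (h.eq_of_left hx).symm, fun h ↦ h ▸ Perm.SameCycle.rfl⟩

variable [Fintype α] [DecidableEq α]

lemma setOf_sameCycle_of_apply_ne_self (hx : π x ≠ x) :
    {y | π.SameCycle x y} = (π.cycleOf x).support :=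
  Set.ext fun _ ↦ (Perm.mem_support_cycleOf_iff' hx).symm

lemma injOn_support_cycleFactorsFinset (π : Perm α) :
    Set.InjOn (fun σ : Perm α ↦ (σ.support : Set α)) π.cycleFactorsFinset := by
  intro σ hσ τ hτ support_eq
  obtain ⟨x, hxσ⟩ := (Perm.mem_cycleFactorsFinset_iff.1 hσ).1.nonempty_support
  have hxτ : x ∈ τ.support := Finset.coe_inj.1 support_eq ▸ hxσ
  rw [Perm.cycle_is_cycleOf hxσ hσ, Perm.cycle_is_cycleOf hxτ hτ]

lemma setOf_sameCycle_ncard_one (π : Perm α) :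
    {o : Set α | (∃ x, o = {y | π.SameCycle x y}) ∧ o.ncard = 1} =
      (fun x ↦ {x}) '' ((π.supportᶜ : Finset α) : Set α) := by
  ext o
  simp only [Set.mem_ofPred_eq, Set.mem_image, Finset.mem_coe, Finset.mem_compl,
    Perm.notMem_support]
  constructor
  · rintro ⟨⟨x, rfl⟩, hcard⟩
    have hx : π x = x := by
      by_contra hx
      rw [setOf_sameCycle_of_apply_ne_self hx, Set.ncard_coe_finset] at hcard
      exact Perm.card_support_ne_one _ hcard
    exact ⟨x, hx, (setOf_sameCycle_of_apply_eq_self hx).symm⟩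
  · rintro ⟨x, hx, rfl⟩
    exact ⟨⟨x, (setOf_sameCycle_of_apply_eq_self hx).symm⟩, Set.ncard_singleton x⟩

lemma setOf_sameCycle_ncard_of_two_le (π : Perm α) {i : ℕ} (hi : 2 ≤ i) :
    {o : Set α | (∃ x, o = {y | π.SameCycle x y}) ∧ o.ncard = i} =
      (fun σ : Perm α ↦ (σ.support : Set α)) ''
        ({σ ∈ π.cycleFactorsFinset | i = σ.support.card} : Finset (Perm α)) := by
  ext o
  simp only [Set.mem_ofPred_eq, Set.mem_image, Finset.mem_coe, Finset.mem_filter]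
  constructor
  · rintro ⟨⟨x, rfl⟩, hcard⟩
    have hx : π x ≠ x := fun hx ↦ by
      rw [setOf_sameCycle_of_apply_eq_self hx, Set.ncard_singleton] at hcard
      omega
    rw [setOf_sameCycle_of_apply_ne_self hx, Set.ncard_coe_finset] at hcard
    exact ⟨π.cycleOf x,
      ⟨Perm.cycleOf_mem_cycleFactorsFinset_iff.2 (Perm.mem_support.2 hx), hcard.symm⟩,
      (setOf_sameCycle_of_apply_ne_self hx).symm⟩
  · rintro ⟨σ, ⟨hσ, hcard⟩, rfl⟩
    refine ⟨?_, by rw [Set.ncard_coe_finset, hcard]⟩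
    obtain ⟨x, hxσ⟩ := (Perm.mem_cycleFactorsFinset_iff.1 hσ).1.nonempty_support
    have hx : π x ≠ x := Perm.mem_support.1 (Perm.mem_cycleFactorsFinset_support_le hσ hxσ)
    exact ⟨x, by rw [setOf_sameCycle_of_apply_ne_self hx, ← Perm.cycle_is_cycleOf hxσ hσ]⟩

end CycleClasses

section CycleCounts

variable {α : Type*} [Fintype α] [DecidableEq α]

/-- The cycle type of `π` as a multiplicity function: `cycleCounts π i` is the number `a_i(π)` of
cycles of length `i`. Fixed points count as cycles of length `1`, unlike in
`Equiv.Perm.cycleType`. -/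
noncomputable def cycleCounts (π : Perm α) : ℕ →₀ ℕ :=
  Multiset.toFinsupp π.partition.parts

lemma cycleCounts_zero (π : Perm α) : cycleCounts π 0 = 0 :=
  Multiset.count_eq_zero.2 fun h ↦ (π.partition.parts_pos h).false

lemma sum_toMultiset_cycleCounts (π : Perm α) :
    (cycleCounts π).toMultiset.sum = Fintype.card α := by
  rw [cycleCounts, Multiset.toFinsupp_toMultiset, π.partition.parts_sum]

lemma count_one_cycleType (π : Perm α) : π.cycleType.count 1 = 0 :=
  Multiset.count_eq_zero.2 fun h ↦ absurd (Perm.two_le_of_mem_cycleType h) (by decide)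

lemma cycleCounts_one (π : Perm α) : cycleCounts π 1 = Fintype.card α - π.support.card := by
  rw [cycleCounts, Multiset.toFinsupp_apply, Perm.parts_partition, Multiset.count_add,
    count_one_cycleType, Multiset.count_replicate_self, zero_add]

lemma cycleCounts_of_ne_one (π : Perm α) {i : ℕ} (hi : i ≠ 1) :
    cycleCounts π i = π.cycleType.count i := by
  rw [cycleCounts, Multiset.toFinsupp_apply, Perm.parts_partition, Multiset.count_add,
    Multiset.count_replicate, if_neg hi.symm, add_zero]

lemma numCycles_eq_cycleCounts {n : ℕ} (π : Perm (Fin n)) {i : ℕ} (hi : 0 < i) :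
    numCycles n π i = cycleCounts π i := by
  rw [numCycles]
  rcases eq_or_ne i 1 with rfl | hi_ne
  · rw [setOf_sameCycle_ncard_one, Set.ncard_image_of_injective _ Set.singleton_injective,
      Set.ncard_coe_finset, Finset.card_compl, cycleCounts_one]
  · rw [setOf_sameCycle_ncard_of_two_le π (by omega), cycleCounts_of_ne_one π hi_ne,
      ((injOn_support_cycleFactorsFinset π).mono (Finset.coe_subset.2
        (Finset.filter_subset _ _))).ncard_image,
      Set.ncard_coe_finset, Perm.cycleType_def, Multiset.count_map]
    rfl

lemma toFinsupp_cycleType (π : Perm α) :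
    Multiset.toFinsupp π.cycleType = (cycleCounts π).erase 1 := by
  ext i
  rcases eq_or_ne i 1 with rfl | hi
  · simp [count_one_cycleType]
  · simp [hi, cycleCounts_of_ne_one]

lemma sum_toMultiset_eq_add_erase_one (m : ℕ →₀ ℕ) :
    m.toMultiset.sum = m 1 + (m.erase 1).toMultiset.sum := by
  conv_lhs => rw [← m.single_add_erase 1]
  simp [Multiset.sum_nsmul]

lemma cycleCounts_eq_iff {π : Perm α} {m : ℕ →₀ ℕ} (hm : m.toMultiset.sum = Fintype.card α) :
    cycleCounts π = m ↔ π.cycleType = (m.erase 1).toMultiset := by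
  rw [← Multiset.toFinsupp_eq_iff, toFinsupp_cycleType]
  refine ⟨fun h ↦ by rw [h], fun erase_eq ↦ ?_⟩
  have apply_one_eq : cycleCounts π 1 = m 1 := by
    have sum_eq := (sum_toMultiset_cycleCounts π).trans hm.symm
    rwa [sum_toMultiset_eq_add_erase_one, sum_toMultiset_eq_add_erase_one m, erase_eq,
      add_left_inj] at sum_eq
  rw [← (cycleCounts π).single_add_erase 1, erase_eq, apply_one_eq, m.single_add_erase 1]

lemma card_cycleCounts_eq_mul_prod {m : ℕ →₀ ℕ} (hm0 : m 0 = 0)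
    (hm : m.toMultiset.sum = Fintype.card α) :
    Nat.card {π : Perm α // cycleCounts π = m} * m.prod (fun i a ↦ i ^ a * a !) =
      (Fintype.card α)! := by
  set t := (m.erase 1).toMultiset with ht
  have sum_eq : m 1 + t.sum = Fintype.card α := by rw [← sum_toMultiset_eq_add_erase_one, hm]
  have two_le (i : ℕ) (hi : i ∈ t) : 2 ≤ i := by
    have hi' : i ≠ 1 ∧ m i ≠ 0 := by simpa [ht] using hi
    have : i ≠ 0 := by
      rintro rfl
      exact hi'.2 hm0
    omega
  have prod_eq : m.prod (fun i a ↦ i ^ a * a !) =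
      (m 1)! * t.prod * ∏ i ∈ t.toFinset, (t.count i)! := by
    rw [← m.mul_prod_erase' 1 _ (by simp), one_pow, one_mul, mul_assoc, Finsupp.prod_mul,
      ht, Finsupp.prod_toMultiset, Finsupp.toFinset_toMultiset]
    simp_rw [Finsupp.count_toMultiset]
    rfl
  have card_mul := Perm.card_of_cycleType_mul_eq α t
  rw [if_pos ⟨by omega, two_le⟩, show Fintype.card α - t.sum = m 1 by omega, ← prod_eq] at card_mul
  simp_rw [cycleCounts_eq_iff hm]
  rwa [Nat.card_eq_fintype_card, Fintype.card_subtype]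

end CycleCounts

section CycleMean

variable {K : Type*} [Field K]

/-- The Poisson parameter `z ^ i / i` of the number of cycles of length `i`. The value at `i = 0` is
`0` because `1 / 0 = 0`, so `poissonWeight (cycleMean z)` vanishes on configurations with `m 0 ≠ 0`,
which are not cycle types of permutations. -/
def cycleMean (z : K) (i : ℕ) : K :=
  z ^ i / i

lemma poissonWeight_cycleMean (z : K) (m : ℕ →₀ ℕ) :
    poissonWeight (cycleMean z) m =
      z ^ m.toMultiset.sum / (m.prod fun i a ↦ i ^ a * a ! : ℕ) := by
  have pow_sum : z ^ m.toMultiset.sum = m.prod fun i a ↦ (z ^ i) ^ a := by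
    simp only [Finsupp.sum_toMultiset, Finsupp.sum, Finsupp.prod, ← Finset.prod_pow_eq_pow_sum,
      ← pow_mul, smul_eq_mul, mul_comm]
  rw [pow_sum]
  simp only [poissonWeight, cycleMean, Finsupp.prod, Nat.cast_prod, Nat.cast_mul, Nat.cast_pow,
    div_pow, div_div, Finset.prod_div_distrib]

lemma pow_div_factorial_mul_card_cycleCounts_eq [CharZero K] (z : K) (m : ℕ →₀ ℕ) :
    z ^ m.toMultiset.sum / (m.toMultiset.sum)! *
        Nat.card {π : Perm (Fin m.toMultiset.sum) // cycleCounts π = m} =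
      poissonWeight (cycleMean z) m := by
  rw [poissonWeight_cycleMean]
  rcases eq_or_ne (m 0) 0 with hm0 | hm0
  · have card_mul := card_cycleCounts_eq_mul_prod (α := Fin m.toMultiset.sum) hm0 (by simp)
    rw [Fintype.card_fin] at card_mul
    have factors_ne_zero := mul_ne_zero_iff.1 (card_mul.trans_ne (Nat.factorial_ne_zero _))
    have card_ne_zero : (Nat.card {π : Perm (Fin m.toMultiset.sum) // cycleCounts π = m} : K) ≠ 0 :=
      Nat.cast_ne_zero.2 factors_ne_zero.1
    rw [← card_mul, Nat.cast_mul, div_mul_eq_mul_div, mul_comm (z ^ _),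
      mul_div_mul_left _ _ card_ne_zero]
  · have fiber_empty : IsEmpty {π : Perm (Fin m.toMultiset.sum) // cycleCounts π = m} :=
      ⟨fun π ↦ hm0 (π.2 ▸ cycleCounts_zero π.1)⟩
    have prod_eq_zero : (m.prod fun i a ↦ i ^ a * a !) = 0 :=
      Finset.prod_eq_zero (Finsupp.mem_support_iff.2 hm0) (by simp [hm0])
    simp [prod_eq_zero]

end CycleMean

section GeneratingFunction

variable {𝕜 : Type*} [RCLike 𝕜]

lemma tsum_pow_div_factorial_cycleCounts_eq (z : 𝕜) (m : ℕ →₀ ℕ) :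
    ∑' p : ↥((fun p : (n : ℕ) × Perm (Fin n) ↦ cycleCounts p.2) ⁻¹' {m}),
        z ^ p.1.1 / (p.1.1 ! : 𝕜) = poissonWeight (cycleMean z) m := by
  let toFiber (π : {π : Perm (Fin m.toMultiset.sum) // cycleCounts π = m}) :
      ↥((fun p : (n : ℕ) × Perm (Fin n) ↦ cycleCounts p.2) ⁻¹' {m}) := ⟨⟨_, π.1⟩, π.2⟩
  have toFiber_bijective : toFiber.Bijective := by
    refine ⟨fun π σ h ↦ by simpa [toFiber, Subtype.ext_iff] using h, ?_⟩
    rintro ⟨⟨n, π⟩, hπ : cycleCounts π = m⟩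
    obtain rfl : m.toMultiset.sum = n := by
      rw [← hπ, sum_toMultiset_cycleCounts, Fintype.card_fin]
    exact ⟨⟨π, hπ⟩, rfl⟩
  rw [← (Equiv.ofBijective toFiber toFiber_bijective).tsum_eq,
    ← pow_div_factorial_mul_card_cycleCounts_eq]
  simp [toFiber, mul_comm]

variable {z : 𝕜}

lemma summable_pow_div_factorial_sigma_perm (hz : ‖z‖ < 1) :
    Summable fun p : (n : ℕ) × Perm (Fin n) ↦ z ^ p.1 / (p.1 ! : 𝕜) := by
  refine .of_norm ((summable_sigma_of_nonneg fun _ ↦ norm_nonneg _).2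
    ⟨fun n ↦ (hasSum_fintype _).summable, ?_⟩)
  refine (summable_geometric_of_lt_one (norm_nonneg z) hz).congr fun n ↦ ?_
  have factorial_ne_zero : (n ! : ℝ) ≠ 0 := by positivity
  simp [Fintype.card_perm, mul_div_cancel₀ _ factorial_ne_zero]

lemma summable_poissonWeight_cycleMean (hz : ‖z‖ < 1) :
    Summable (poissonWeight (cycleMean z)) := by
  have group_by_counts :=
    (summable_pow_div_factorial_sigma_perm hz).hasSum.tsum_fiberwise fun p ↦ cycleCounts p.2
  rw [funext (tsum_pow_div_factorial_cycleCounts_eq z)] at group_by_counts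
  exact group_by_counts.summable

lemma hasSum_pow_div_factorial_mul_card_cycleCounts_mem (hz : ‖z‖ < 1) (A : Set (ℕ →₀ ℕ)) :
    HasSum (fun n ↦ z ^ n / n ! * Nat.card {π : Perm (Fin n) // cycleCounts π ∈ A})
      (∑' m : A, poissonWeight (cycleMean z) m) := by
  classical
  let weight (p : (n : ℕ) × Perm (Fin n)) : 𝕜 := if cycleCounts p.2 ∈ A then z ^ p.1 / p.1 ! else 0
  have summable_weight : Summable weight :=
    (summable_pow_div_factorial_sigma_perm hz).indicator {p | cycleCounts p.2 ∈ A}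
  have group_by_counts (m : ℕ →₀ ℕ) :
      ∑' p : ↥((fun p : (n : ℕ) × Perm (Fin n) ↦ cycleCounts p.2) ⁻¹' {m}), weight p =
        A.indicator (poissonWeight (cycleMean z)) m := by
    have weight_eq (p : ↥((fun p : (n : ℕ) × Perm (Fin n) ↦ cycleCounts p.2) ⁻¹' {m})) :
        weight p = if m ∈ A then z ^ p.1.1 / (p.1.1 ! : 𝕜) else 0 :=
      if_congr (iff_of_eq (congrArg (· ∈ A) p.2)) rfl rfl
    rw [tsum_congr weight_eq, Set.indicator_apply, ← tsum_pow_div_factorial_cycleCounts_eq]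
    split_ifs
    · rfl
    · exact tsum_zero
  have group_by_size (n : ℕ) : HasSum (fun π : Perm (Fin n) ↦ weight ⟨n, π⟩)
      (z ^ n / n ! * Nat.card {π : Perm (Fin n) // cycleCounts π ∈ A}) := by
    have sum_eq : ∑ π : Perm (Fin n), weight ⟨n, π⟩ =
        z ^ n / n ! * Nat.card {π : Perm (Fin n) // cycleCounts π ∈ A} := by
      simp [weight, Finset.sum_ite, Fintype.card_subtype, mul_comm]
    exact sum_eq ▸ hasSum_fintype _
  have tsum_weight := summable_weight.hasSum.tsum_fiberwise fun p ↦ cycleCounts p.2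
  rw [funext group_by_counts] at tsum_weight
  rw [tsum_subtype A, tsum_weight.tsum_eq]
  exact summable_weight.hasSum.sigma group_by_size

lemma tsum_poissonWeight_cycleMean (hz : ‖z‖ < 1) :
    ∑' m, poissonWeight (cycleMean z) m = (1 - z)⁻¹ := by
  have count_all := hasSum_pow_div_factorial_mul_card_cycleCounts_mem hz Set.univ
  rw [tsum_univ] at count_all
  refine count_all.unique ?_
  convert hasSum_geometric_of_norm_lt_one hz using 2 with n
  have factorial_ne_zero : (n ! : 𝕜) ≠ 0 := Nat.cast_ne_zero.2 n.factorial_ne_zero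
  simp [Fintype.card_perm, factorial_ne_zero]

end GeneratingFunction

theorem stmt_15_general {𝕜 : Type*} [RCLike 𝕜] {z : 𝕜} (hz : ‖z‖ < 1) (S : Finset ℕ)
    (hS : ∀ i ∈ S, 0 < i) (c : ℕ → ℕ) :
    HasSum (fun n ↦ (1 - z) * z ^ n / n ! *
        Nat.card {π : Perm (Fin n) // ∀ i ∈ S, numCycles n π i = c i})
      (∏ i ∈ S, exp (-(z ^ i / i)) * (z ^ i / i) ^ c i / (c i)!) := by
  have one_sub_ne_zero : 1 - z ≠ 0 := sub_ne_zero.2 fun h ↦ by simp [← h] at hz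
  have hasSum_counts := (hasSum_pow_div_factorial_mul_card_cycleCounts_mem hz
    {m | ∀ i ∈ S, m i = c i}).mul_left (1 - z)
  rw [tsum_poissonWeight_cylinder (summable_poissonWeight_cycleMean hz),
    tsum_poissonWeight_cycleMean hz, mul_comm, inv_mul_cancel_right₀ one_sub_ne_zero]
    at hasSum_counts
  have cylinder_iff (n : ℕ) (π : Perm (Fin n)) :
      cycleCounts π ∈ {m : ℕ →₀ ℕ | ∀ i ∈ S, m i = c i} ↔ ∀ i ∈ S, numCycles n π i = c i :=
    forall₂_congr fun i hi ↦ by rw [numCycles_eq_cycleCounts π (hS i hi)]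
  simpa only [cylinder_iff, cycleMean, ← mul_assoc, ← mul_div_assoc] using hasSum_counts

/-- For `0 < u < 1`, `k ≥ 1` and nonnegative integers `c_1, …, c_k`:
`∑_{n=0}^∞ (1−u)uⁿ/n! ⬝ #{π ∈ Sₙ : a_i(π) = c_i, 1 ≤ i ≤ k}
  = ∏_{i=1}^k e^{−uⁱ/i} (uⁱ/i)^{c_i} / c_i!`:
under the measure picking `n` with probability `(1−u)uⁿ` and then `π` uniform in `Sₙ`,
the `a_i(π)` are independent Poisson(`uⁱ/i`). -/
theorem stmt_15 (u : ℝ) (hu0 : 0 < u) (hu1 : u < 1) (k : ℕ) (hk : 0 < k)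
    (c : ℕ → ℕ) :
    HasSum (fun n : ℕ =>
        (1 - u) * u ^ n / n.factorial *
          (Nat.card {π : Equiv.Perm (Fin n) //
            ∀ i, 1 ≤ i → i ≤ k → numCycles n π i = c i} : ℝ))
      (∏ i ∈ Finset.Icc 1 k,
        Real.exp (-(u ^ i / i)) * (u ^ i / i) ^ c i / (c i).factorial) := by
  have hu : ‖u‖ < 1 := by rwa [Real.norm_of_nonneg hu0.le]
  simpa only [Finset.mem_Icc, and_imp, Real.exp_eq_exp_ℝ] using
    stmt_15_general hu (Finset.Icc 1 k) (fun i hi ↦ (Finset.mem_Icc.1 hi).1) c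
end

section
/- Let q be a prime power and F the finite field with q² elements. For a monic polynomial φ ∈ F[z] of degree m with φ(0) ≠ 0, define φ̃ ∈ F[z] to be the monic polynomial z^m · φ^{(q)}(1/z) / (φ(0))^q, where φ^{(q)} is obtained from φ by raising each coefficient to the q-th power; explicitly, if φ(z) = z^m + α_{m−1}z^{m−1} + ⋯ + α_1 z + α_0 with α_0 ≠ 0, then φ̃(z) = z^m + (α_1/α_0)^q z^{m−1} + ⋯ + (α_{m−1}/α_0)^q z + (1/α_0)^q. If φ is monic irreducible, φ ≠ z, and φ = φ̃, then the degree of φ is odd. -/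
open Polynomial

/-- `φ^{(q)}`: the polynomial obtained from `φ` by raising each coefficient to the
`q`-th power. -/
noncomputable def coeffPow {F : Type*} [Field F] (q : ℕ) (φ : Polynomial F) :
    Polynomial F :=
  ∑ i ∈ Finset.range (φ.natDegree + 1), Polynomial.C (φ.coeff i ^ q) * Polynomial.X ^ i

/-- `φ̃ = z^m φ^{(q)}(1/z) / (φ(0))^q`: the monic polynomial whose coefficient list is
that of `φ^{(q)}` reversed and divided by `φ(0)^q`. -/
noncomputable def tildePoly {F : Type*} [Field F] (q : ℕ) (φ : Polynomial F) :
    Polynomial F :=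
  Polynomial.C ((φ.coeff 0 ^ q)⁻¹) * (coeffPow q φ).reverse

/-!
Let `F` have `q ^ e` elements with `e` even, and let `a` be the class of `X` in `K = F[X]/(φ)`.
Raising `φ(a) = 0` to the power `q` shows that `a ^ (-q)` is a root of `φ̃ = φ`, so some
`τ ∈ Gal(K/F)` satisfies `τ a = a ^ (-q)`. Iterating, `τ ^ e` sends `a` to
`a ^ (-q) ^ e = a ^ |F|`: it is the Frobenius of `K/F`, a generator of the cyclic group `Gal(K/F)`
of order `deg φ`. A generator that is an `e`-th power forces `e` to be coprime to the order.
-/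

lemma coprime_card_of_orderOf_pow_eq_card {G : Type*} [Group G] [Finite G] {g : G} {n : ℕ}
    (h : orderOf (g ^ n) = Nat.card G) : n.Coprime (Nat.card G) := by
  have hg : orderOf g = Nat.card G :=
    (orderOf_dvd_natCard g).antisymm (h ▸ orderOf_pow_dvd n)
  rw [orderOf_pow, hg, Nat.div_eq_self] at h
  exact Nat.Coprime.symm (h.resolve_left Nat.card_pos.ne')

lemma algEquiv_pow_apply_eq_zpow {R D : Type*} [CommSemiring R] [DivisionRing D] [Algebra R D]
    {τ : D ≃ₐ[R] D} {a : D} {z : ℤ} (hτ : τ a = a ^ z) (n : ℕ) : (τ ^ n) a = a ^ z ^ n := by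
  induction n with
  | zero => simp
  | succ n ih => rw [pow_succ, AlgEquiv.mul_apply, hτ, map_zpow₀, ih, ← zpow_mul, pow_succ]

section FieldExtension

variable {F K : Type*} [Field F] [Field K] [Algebra F K]

lemma coprime_finrank_of_pow_eq_frobenius [Fintype F] [Finite K] {τ : Gal(K/F)} {e : ℕ}
    (hτ : τ ^ e = FiniteField.frobeniusAlgEquivOfAlgebraic F K) :
    e.Coprime (Module.finrank F K) := by
  rw [← IsGalois.card_aut_eq_finrank]
  apply coprime_card_of_orderOf_pow_eq_card
  rw [hτ, FiniteField.orderOf_frobeniusAlgEquivOfAlgebraic, IsGalois.card_aut_eq_finrank]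

lemma exists_gal_apply_eq_of_aeval_eq_zero [Normal F K] {φ : F[X]} (hφ : Irreducible φ) {a b : K}
    (ha : aeval a φ = 0) (hb : aeval b φ = 0) : ∃ τ : Gal(K/F), τ a = b := by
  have hconj : IsConjRoot F b a := by
    rw [isConjRoot_def, ← minpoly.eq_of_irreducible hφ ha, ← minpoly.eq_of_irreducible hφ hb]
  exact isConjRoot_iff_exists_algEquiv.mp hconj

end FieldExtension

section Tilde

variable {F : Type*} [Field F]

lemma coeffPow_eq_map_iterateFrobenius (p k : ℕ) [ExpChar F p] (φ : F[X]) :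
    coeffPow (p ^ k) φ = φ.map (iterateFrobenius F p k) := by
  rw [as_sum_range_C_mul_X_pow (φ.map (iterateFrobenius F p k))]
  simp [coeffPow, iterateFrobenius_def]

lemma aeval_pow_coeffPow {A : Type*} [CommRing A] [Algebra F A] (p k : ℕ) [ExpChar F p]
    [ExpChar A p] (φ : F[X]) (a : A) :
    aeval (a ^ p ^ k) (coeffPow (p ^ k) φ) = aeval a φ ^ p ^ k := by
  rw [coeffPow_eq_map_iterateFrobenius]
  exact (φ.map_aeval_eq_aeval_map (RingHom.iterateFrobenius_comm _ p k) a).symm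

lemma coeff_zero_ne_zero_of_tildePoly_ne_zero {q : ℕ} (hq : q ≠ 0) {φ : F[X]}
    (h : tildePoly q φ ≠ 0) : φ.coeff 0 ≠ 0 := by
  intro h0
  simp [tildePoly, h0, hq] at h

variable {K : Type*} [Field K] [Algebra F K]

lemma aeval_inv_tildePoly_eq_zero {q : ℕ} {φ : F[X]} {b : K} (hb : b ≠ 0)
    (h : aeval b (coeffPow q φ) = 0) : aeval b⁻¹ (tildePoly q φ) = 0 := by
  let := invertibleOfNonzero hb
  have hrev : aeval b⁻¹ (coeffPow q φ).reverse = 0 := by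
    rw [← invOf_eq_inv]
    exact (eval₂_reverse_eq_zero_iff (algebraMap F K) b _).mpr h
  rw [tildePoly, map_mul, hrev, mul_zero]

lemma aeval_zpow_neg_tildePoly_eq_zero {p k : ℕ} [ExpChar F p] {φ : F[X]} {a : K} (ha : a ≠ 0)
    (hroot : aeval a φ = 0) : aeval (a ^ (-(p ^ k : ℕ) : ℤ)) (tildePoly (p ^ k) φ) = 0 := by
  have : ExpChar K p := expChar_of_injective_algebraMap (algebraMap F K).injective p
  have hpk : p ^ k ≠ 0 := (expChar_pow_pos F p k).ne'
  rw [zpow_neg, zpow_natCast]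
  apply aeval_inv_tildePoly_eq_zero (pow_ne_zero _ ha)
  rw [aeval_pow_coeffPow, hroot, zero_pow hpk]

end Tilde

section FiniteField

variable {F : Type*} [Field F] [Fintype F] {q e : ℕ}

lemma exists_eq_expChar_pow_of_card_eq_pow (hF : Fintype.card F = q ^ e) :
    ∃ p k, ExpChar F p ∧ q = p ^ k := by
  obtain ⟨p, _, n, hp, hcard⟩ := FiniteField.card' F
  have : Fact p.Prime := ⟨hp⟩
  have he : e ≠ 0 := by
    rintro rfl
    exact Fintype.one_lt_card.ne' (hF.trans (pow_zero q))
  obtain ⟨k, -, hk⟩ := (Nat.dvd_prime_pow hp).mp (hcard ▸ hF ▸ dvd_pow_self q he)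
  exact ⟨p, k, inferInstance, hk⟩

variable {K : Type*} [Field K] [Algebra F K]

lemma gal_pow_eq_frobenius_of_apply_eq_zpow_neg [Algebra.IsAlgebraic F K]
    (hF : Fintype.card F = q ^ e) (he : Even e) {a : K} (hgen : Algebra.adjoin F {a} = ⊤)
    {τ : Gal(K/F)} (hτ : τ a = a ^ (-q : ℤ)) :
    τ ^ e = FiniteField.frobeniusAlgEquivOfAlgebraic F K := by
  have hτe : (τ ^ e) a = a ^ q ^ e := by
    rw [algEquiv_pow_apply_eq_zpow hτ, he.neg_pow]
    exact_mod_cast zpow_natCast a (q ^ e)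
  apply AlgEquiv.coe_toAlgHom_injective
  apply AlgHom.ext_of_adjoin_eq_top hgen
  rintro _ rfl
  simpa [hF] using hτe

lemma exists_gal_apply_eq_zpow_neg_of_eq_tildePoly [Normal F K] (hF : Fintype.card F = q ^ e)
    {φ : F[X]} (hirr : Irreducible φ) (hfix : φ = tildePoly q φ) {a : K} (ha : aeval a φ = 0) :
    ∃ τ : Gal(K/F), τ a = a ^ (-q : ℤ) := by
  obtain ⟨p, k, _, rfl⟩ := exists_eq_expChar_pow_of_card_eq_pow hF
  have hcoeff : φ.coeff 0 ≠ 0 :=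
    coeff_zero_ne_zero_of_tildePoly_ne_zero (expChar_pow_pos F p k).ne' (hfix ▸ hirr.ne_zero)
  have ha0 : a ≠ 0 := by
    rintro rfl
    exact hcoeff (by simpa [← coeff_zero_eq_aeval_zero'] using ha)
  have hb : aeval (a ^ (-(p ^ k : ℕ) : ℤ)) φ = 0 :=
    hfix ▸ aeval_zpow_neg_tildePoly_eq_zero (p := p) ha0 ha
  exact exists_gal_apply_eq_of_aeval_eq_zero hirr ha hb

theorem stmt_17_general (hF : Fintype.card F = q ^ e) (he : Even e) {φ : F[X]}
    (hirr : Irreducible φ) (hfix : φ = tildePoly q φ) : e.Coprime φ.natDegree := by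
  have : Fact (Irreducible φ) := ⟨hirr⟩
  let basis := AdjoinRoot.powerBasis hirr.ne_zero
  have : Module.Finite F (AdjoinRoot φ) := basis.finite
  have : Finite (AdjoinRoot φ) := Module.finite_of_finite F
  have hdim : Module.finrank F (AdjoinRoot φ) = φ.natDegree := by
    rw [basis.finrank, AdjoinRoot.powerBasis_dim]
  obtain ⟨τ, hτ⟩ :=
    exists_gal_apply_eq_zpow_neg_of_eq_tildePoly hF hirr hfix (AdjoinRoot.eval₂_root φ)
  have hfrob := gal_pow_eq_frobenius_of_apply_eq_zpow_neg hF he AdjoinRoot.adjoinRoot_eq_top hτ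
  exact hdim ▸ coprime_finrank_of_pow_eq_frobenius hfrob

end FiniteField

/-- Let `q` be a prime power and `F` the field with `q²` elements.  If `φ ∈ F[z]` is
monic irreducible, `φ ≠ z`, and `φ = φ̃`, then `deg φ` is odd. -/
theorem stmt_17 (q : ℕ) (hq : IsPrimePow q) (F : Type) [Field F] [Fintype F]
    (hF : Fintype.card F = q ^ 2) (φ : Polynomial F) (hmon : φ.Monic)
    (hirr : Irreducible φ) (hne : φ ≠ Polynomial.X) (hfix : φ = tildePoly q φ) :
    Odd φ.natDegree := by
  exact Nat.coprime_two_left.mp (stmt_17_general hF even_two hirr hfix)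
end
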